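/- Let f(k) = k. Then for every d ≥ 1 and μ ≥ 0, 𝒩(d,μ,f) = C(2d+μ−1, μ). -/

import Mathlib

/-- Multi-indices `i : Fin d → ℕ` with `i k ≥ 1` for all `k` and `∑ k, i k = d + μ`. -/
def smolyakIndices (d μ : ℕ) : Finset (Fin d → ℕ) :=
  (Fintype.piFinset fun _ => Finset.Icc 1 (d + μ)).filter fun i => ∑ k, i k = d + μ

/-- `𝒩(d, μ, f) = ∑_{|i| = d + μ, i ≥ 1} ∏ₖ f(iₖ)`. -/
def calN (f : ℕ → ℕ) (d μ : ℕ) : ℕ :=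
  ∑ i ∈ smolyakIndices d μ, ∏ k, f (i k)

/-!
Lowering every index by one identifies `𝒩(d, μ, f)` with the coefficient of `X ^ μ` in
`(∑ n, f (n + 1) X ^ n) ^ d`. For `f(k) = k` the base is `(1 - X)⁻² = (∑ n, X ^ n) ^ 2`, and
the coefficients of `(∑ n, X ^ n) ^ (2 * d)` count multisets drawn from `2 * d` elements.
-/

theorem coeff_mk_one_pow {R : Type*} [CommSemiring R] (d n : ℕ) :
    PowerSeries.coeff n ((PowerSeries.mk 1 : PowerSeries R) ^ d) = (d.multichoose n : R) := by
  simp [PowerSeries.coeff_pow, Finset.card_finsuppAntidiag_nat_eq_multichoose]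

theorem mem_smolyakIndices {d μ : ℕ} {i : Fin d → ℕ} :
    i ∈ smolyakIndices d μ ↔ (∀ k, 1 ≤ i k) ∧ ∑ k, i k = d + μ := by
  simp only [smolyakIndices, Finset.mem_filter, Fintype.mem_piFinset, Finset.mem_Icc]
  refine and_congr_left fun hsum => forall_congr' fun k => and_iff_left ?_
  exact hsum ▸ Finset.single_le_sum_of_canonicallyOrdered (Finset.mem_univ k)

theorem add_one_mem_smolyakIndices {d μ : ℕ} {l : Fin d → ℕ} :
    l + 1 ∈ smolyakIndices d μ ↔ ∑ k, l k = μ := by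
  simp [mem_smolyakIndices, Finset.sum_add_distrib, add_comm d]

theorem calN_eq_sum_finsuppAntidiag (f : ℕ → ℕ) (d μ : ℕ) :
    calN f d μ = ∑ l ∈ Finset.univ.finsuppAntidiag μ, ∏ k : Fin d, f (l k + 1) := by
  have sub_add_cancel_of_mem {i : Fin d → ℕ} (hi : i ∈ smolyakIndices d μ) : i - 1 + 1 = i :=
    tsub_add_cancel_of_le (mem_smolyakIndices.mp hi).1
  symm
  refine Finset.sum_bij' (fun l _ => ⇑l + 1) (fun i _ => Finsupp.equivFunOnFinite.symm (i - 1))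
    (fun l hl => ?_) (fun i hi => ?_) (fun l _ => ?_) (fun i hi => ?_) (fun l _ => rfl)
  · exact add_one_mem_smolyakIndices.mpr (Finset.mem_finsuppAntidiag.mp hl).1
  · rw [← sub_add_cancel_of_mem hi, add_one_mem_smolyakIndices] at hi
    exact Finset.mem_finsuppAntidiag.mpr ⟨hi, Finset.subset_univ _⟩
  · rw [add_tsub_cancel_right, Finsupp.equivFunOnFinite_symm_coe]
  · exact sub_add_cancel_of_mem hi

theorem calN_eq_coeff_pow (f : ℕ → ℕ) (d μ : ℕ) :
    calN f d μ = PowerSeries.coeff μ (PowerSeries.mk (fun n => f (n + 1)) ^ d) := by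
  rw [calN_eq_sum_finsuppAntidiag, ← Fin.prod_const, PowerSeries.coeff_prod]
  simp only [PowerSeries.coeff_mk]

/-- For `f(k) = k`, `𝒩(d, μ, f) = C(2d+μ-1, μ)`. -/
theorem calN_of_id (d μ : ℕ) (hd : 1 ≤ d) :
    calN (fun k => k) d μ = (2 * d + μ - 1).choose μ := by
  have mk_add_one_eq_sq : PowerSeries.mk (fun n : ℕ => n + 1) = PowerSeries.mk 1 ^ 2 := by
    ext n
    rw [PowerSeries.coeff_mk, coeff_mk_one_pow, Nat.multichoose_two, Nat.cast_id]
  calc calN (fun k => k) d μ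
      = PowerSeries.coeff μ (PowerSeries.mk (fun n : ℕ => n + 1) ^ d) := calN_eq_coeff_pow _ d μ
    _ = PowerSeries.coeff μ (PowerSeries.mk 1 ^ (2 * d)) := by rw [mk_add_one_eq_sq, ← pow_mul]
    _ = (2 * d).multichoose μ := by rw [coeff_mk_one_pow, Nat.cast_id]
    _ = (2 * d + μ - 1).choose μ := Nat.multichoose_eq _ _
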